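/- The second Apéry sequence â_n = Σ_{k=0}^n (n choose k)²((n+k) choose k)² · ( Σ_{m=1}^n 1/m³ + Σ_{m=1}^k (−1)^{m−1} / (2m³ · (n choose m) · ((n+m) choose n)) ) satisfies, for every integer n ≥ 0, the linear recurrence (n+2)³·â_{n+2} − (34n³ + 153n² + 231n + 117)·â_{n+1} + (n+1)³·â_n = 0. -/

import Mathlib

/-- The second Apéry sequence
`âₙ = Σ_{k=0}^n (n choose k)²((n+k) choose k)²·(Σ_{m=1}^n 1/m³ +
Σ_{m=1}^k (−1)^{m−1}/(2m³ (n choose m)((n+m) choose n)))`. -/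
def aperyHat (n : ℕ) : ℚ :=
  ∑ k ∈ Finset.range (n + 1), ((n.choose k : ℚ)) ^ 2 * (((n + k).choose k : ℚ)) ^ 2 *
    ((∑ m ∈ Finset.Icc 1 n, 1 / (m : ℚ) ^ 3) +
     ∑ m ∈ Finset.Icc 1 k,
       (-1 : ℚ) ^ (m - 1) / (2 * (m : ℚ) ^ 3 * (n.choose m : ℚ) * ((n + m).choose n : ℚ)))

/-- `C(n,k) C(n+k,k)`. -/
def apE (n k : ℕ) : ℚ := (n.choose k : ℚ) * ((n + k).choose k : ℚ)

/-- The inner factor. -/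
def apC (n k : ℕ) : ℚ :=
  (∑ m ∈ Finset.Icc 1 n, 1 / (m : ℚ) ^ 3) +
     ∑ m ∈ Finset.Icc 1 k,
       (-1 : ℚ) ^ (m - 1) / (2 * (m : ℚ) ^ 3 * (n.choose m : ℚ) * ((n + m).choose n : ℚ))

theorem apE_zero (n : ℕ) : apE n 0 = 1 := by simp [apE]

theorem apE_gt {n k : ℕ} (h : n < k) : apE n k = 0 := by
  simp [apE, Nat.choose_eq_zero_of_lt h]

theorem apE_ne {n k : ℕ} (h : k ≤ n) : apE n k ≠ 0 := by
  have h1 := Nat.choose_pos h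
  have h2 : 0 < (n + k).choose k := Nat.choose_pos (by omega)
  unfold apE
  positivity

theorem apE_k (n k : ℕ) :
    apE n (k + 1) * ((k : ℚ) + 1) ^ 2 = ((n : ℚ) - k) * (n + k + 1) * apE n k := by
  have h2 : ((n + k + 1).choose (k + 1) : ℚ) * (k + 1) = (n + k + 1) * ((n + k).choose k : ℚ) := by
    have := Nat.add_one_mul_choose_eq (n + k) k
    exact_mod_cast this.symm
  have h1 : (n.choose (k + 1) : ℚ) * (k + 1) = n.choose k * ((n : ℚ) - k) := by
    rcases le_or_gt k n with h | h
    · have := Nat.choose_succ_right_eq n k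
      rw [← Nat.cast_sub h]
      exact_mod_cast this
    · simp [Nat.choose_eq_zero_of_lt h, Nat.choose_eq_zero_of_lt (show n < k + 1 by omega)]
  unfold apE
  rw [← add_assoc]
  linear_combination ((n + k + 1).choose (k + 1) : ℚ) * (k + 1) * h1
    + n.choose k * ((n : ℚ) - k) * h2

theorem ap_choose_n (n k : ℕ) :
    ((n + k + 1).choose k : ℚ) * (n + 1) = ((n + k).choose k : ℚ) * (n + k + 1) := by
  have := Nat.choose_mul_succ_eq (n + k) k
  rw [show n + k + 1 - k = n + 1 by omega] at this
  exact_mod_cast this.symm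

theorem apE_n (n k : ℕ) :
    ((n : ℚ) + 1 - k) * apE (n + 1) k = ((n : ℚ) + 1 + k) * apE n k := by
  have h1 : (n.choose k : ℚ) * (n + 1) = ((n + 1).choose k : ℚ) * ((n : ℚ) + 1 - k) := by
    rcases le_or_gt k (n + 1) with h | h
    · have := Nat.choose_mul_succ_eq n k
      have h3 : ((n : ℚ) + 1 - k) = ((n + 1 - k : ℕ) : ℚ) := by
        rw [Nat.cast_sub h]; push_cast; ring
      rw [h3]
      exact_mod_cast this
    · simp [Nat.choose_eq_zero_of_lt h, Nat.choose_eq_zero_of_lt (show n < k by omega)]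
  have h2 := ap_choose_n n k
  have hn : ((n : ℚ) + 1) ≠ 0 := by positivity
  apply mul_right_cancel₀ hn
  unfold apE
  rw [show n + 1 + k = n + k + 1 by omega]
  linear_combination -((n + k + 1).choose k : ℚ) * (n + 1) * h1 + n.choose k * ((n : ℚ) + 1) * h2

theorem apE_nk (n k : ℕ) :
    apE (n + 1) (k + 1) * ((k : ℚ) + 1) ^ 2 = ((n : ℚ) + k + 1) * (n + k + 2) * apE n k := by
  have h1 : ((n + 1).choose (k + 1) : ℚ) * (k + 1) = (n + 1) * (n.choose k : ℚ) := by
    have := Nat.add_one_mul_choose_eq n k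
    exact_mod_cast this.symm
  have h2 : ((n + k + 2).choose (k + 1) : ℚ) * (k + 1)
      = (n + k + 2) * ((n + k + 1).choose k : ℚ) := by
    have := Nat.add_one_mul_choose_eq (n + k + 1) k
    exact_mod_cast this.symm
  have h3 := ap_choose_n n k
  unfold apE
  rw [show n + 1 + (k + 1) = n + k + 2 by omega]
  linear_combination ((n + k + 2).choose (k + 1) : ℚ) * (k + 1) * h1
    + (n + 1) * (n.choose k : ℚ) * h2 + (n.choose k : ℚ) * (n + k + 2) * h3

theorem apE_pk (n k : ℕ) :
    apE n (k + 1) * ((k : ℚ) + 1) ^ 2 = ((n : ℚ) - k) * (n + 1 - k) * apE (n + 1) k := by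
  linear_combination apE_k n k - ((n : ℚ) - k) * apE_n n k

theorem apC_k (n k : ℕ) :
    apC n (k + 1) = apC n k + (-1) ^ k / (2 * ((k : ℚ) + 1) ^ 3 * apE n (k + 1)) := by
  unfold apC apE
  rw [Finset.sum_Icc_succ_top (by omega : 1 ≤ k + 1), ← add_assoc, Nat.choose_symm_add]
  simp [mul_assoc]

theorem apC_n (n k : ℕ) (h : k ≤ n) :
    apC (n + 1) k = apC n k
      + (-1) ^ k / (((n : ℚ) + 1) ^ 2 * (n + 1 - k) * apE (n + 1) k) := by
  induction k with
  | zero =>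
    simp only [apC, apE_zero]
    rw [Finset.sum_Icc_succ_top (by omega : 1 ≤ n + 1)]
    have hn : ((n : ℚ) + 1) ≠ 0 := by positivity
    push_cast
    simp only [sub_zero, mul_one, pow_zero]
    field_simp
    simp [mul_comm]
  | succ k ih =>
    have ih := ih (by omega)
    rw [apC_k, apC_k, ih]
    have hk : ((k : ℚ) + 1) ≠ 0 := by positivity
    have hn : ((n : ℚ) + 1) ≠ 0 := by positivity
    have h1 : ((n : ℚ) - k) ≠ 0 := by
      have : (k : ℚ) + 1 ≤ n := by exact_mod_cast h
      intro h0; linarith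
    have h2 : ((n : ℚ) + 1 - k) ≠ 0 := by
      have : (k : ℚ) + 1 ≤ n := by exact_mod_cast h
      intro h0; linarith
    have h3 : ((n : ℚ) + k + 1) ≠ 0 := by positivity
    have h4 : ((n : ℚ) + k + 2) ≠ 0 := by positivity
    have hf := apE_ne (show k ≤ n by omega)
    have e1 : apE n (k + 1) = ((n : ℚ) - k) * (n + k + 1) * apE n k / ((k : ℚ) + 1) ^ 2 := by
      rw [← apE_k]; field_simp
    have e2 : apE (n + 1) (k + 1)
        = ((n : ℚ) + k + 1) * (n + k + 2) * apE n k / ((k : ℚ) + 1) ^ 2 := by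
      rw [← apE_nk]; field_simp
    have e3 : apE (n + 1) k = ((n : ℚ) + k + 1) * apE n k / (n + 1 - k) := by
      rw [eq_div_iff h2]; linear_combination apE_n n k
    rw [e1, e2, e3, pow_succ (-1 : ℚ) k]
    have h5 : ((n : ℚ) + 1 - (k + 1)) ≠ 0 := by convert h1 using 1; ring
    push_cast
    rw [show ((n : ℚ) + 1 - (k + 1)) = n - k by ring]
    field_simp
    ring

/-- Weighted difference of the inner factors, valid for all `k ≤ n + 1`. -/
theorem apC_n' (n k : ℕ) (h : k ≤ n + 1) :
    apE n k ^ 2 * apC n k = apE n k ^ 2 * apC (n + 1) k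
      - (-1) ^ k * apE n k / (((n : ℚ) + 1) ^ 2 * (n + 1 + k)) := by
  rcases Nat.lt_or_ge n k with h' | h'
  · simp [apE_gt h']
  · rw [apC_n n k h']
    have h2 : ((n : ℚ) + 1 - k) ≠ 0 := by
      have : (k : ℚ) ≤ n := by exact_mod_cast h'
      intro h0; linarith
    have hn : ((n : ℚ) + 1) ≠ 0 := by positivity
    have h3 : ((n : ℚ) + 1 + k) ≠ 0 := by positivity
    have hf := apE_ne h'
    have e3 : apE (n + 1) k = ((n : ℚ) + 1 + k) * apE n k / (n + 1 - k) := by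
      rw [eq_div_iff h2]; linear_combination apE_n n k
    rw [e3]
    field_simp
    ring

/-- Summand of the recurrence. -/
def apT (n k : ℕ) : ℚ :=
  ((n : ℚ) + 2) ^ 3 * (apE (n + 2) k ^ 2 * apC (n + 2) k)
      - (34 * (n : ℚ) ^ 3 + 153 * (n : ℚ) ^ 2 + 231 * (n : ℚ) + 117)
        * (apE (n + 1) k ^ 2 * apC (n + 1) k)
      + ((n : ℚ) + 1) ^ 3 * (apE n k ^ 2 * apC n k)

/-- Zagier's certificate. -/
def apA (n k : ℕ) : ℚ :=
  4 * (2 * (n : ℚ) + 3) * (k * (2 * k + 1) - (2 * (n : ℚ) + 3) ^ 2)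
      * (apE (n + 1) k ^ 2 * apC (n + 1) k)
    - 5 * (2 * (n : ℚ) + 3) * (-1) ^ k * k / (((n : ℚ) + 1) * (n + 2)) * apE (n + 1) k

theorem apT_zero (n : ℕ) : apT n 0 = apA n 0 := by
  have h1 := apC_n (n + 1) 0 (by omega)
  have h2 := apC_n n 0 (by omega)
  have hn : ((n : ℚ) + 1) ≠ 0 := by positivity
  have hn2 : ((n : ℚ) + 2) ≠ 0 := by positivity
  have hn3 : ((n : ℚ) + 1 + 1) ≠ 0 := by positivity
  unfold apT apA
  rw [h1, h2]
  simp only [apE_zero]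
  push_cast
  rw [show (n : ℚ) + 1 + 1 = n + 2 by ring]
  field_simp
  ring

set_option maxRecDepth 100000 in
set_option maxHeartbeats 2000000 in
theorem apT_succ (n k : ℕ) (h : k ≤ n) : apT n (k + 1) = apA n (k + 1) - apA n k := by
  have h1 := apC_n (n + 1) (k + 1) (by omega)
  have h2 := apC_n' n (k + 1) (by omega)
  have h3 := apC_k (n + 1) k
  have hkn : (k : ℚ) ≤ n := by exact_mod_cast h
  have hk : ((k : ℚ) + 1) ≠ 0 := by positivity
  have hn : ((n : ℚ) + 1) ≠ 0 := by positivity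
  have hn2 : ((n : ℚ) + 2) ≠ 0 := by positivity
  have h5 : ((n : ℚ) + 1 - k) ≠ 0 := by intro h0; linarith
  have h6 : ((n : ℚ) + k + 2) ≠ 0 := by positivity
  have h7 : ((n : ℚ) + k + 3) ≠ 0 := by positivity
  have hf := apE_ne (show k ≤ n + 1 by omega)
  have e1 : apE (n + 1) (k + 1)
      = ((n : ℚ) + 1 - k) * (n + k + 2) * apE (n + 1) k / ((k : ℚ) + 1) ^ 2 := by
    rw [eq_div_iff (by positivity), apE_k]; push_cast; ring
  have e2 : apE (n + 2) (k + 1)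
      = ((n : ℚ) + k + 2) * (n + k + 3) * apE (n + 1) k / ((k : ℚ) + 1) ^ 2 := by
    rw [eq_div_iff (by positivity), apE_nk]; push_cast; ring
  have e3 : apE n (k + 1)
      = ((n : ℚ) - k) * (n + 1 - k) * apE (n + 1) k / ((k : ℚ) + 1) ^ 2 := by
    rw [eq_div_iff (by positivity), apE_pk]
  unfold apT apA
  rw [h2, h1, h3]
  rw [show n + 1 + 1 = n + 2 by omega, e1, e2, e3, pow_succ (-1 : ℚ) k]
  generalize apE (n + 1) k = f at *
  generalize apC (n + 1) k = c at *
  generalize (-1 : ℚ) ^ k = s at *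
  push_cast
  rw [show ((n : ℚ) + 1 + 1 - (k + 1)) = n + 1 - k by ring,
    show ((n : ℚ) + 1 + 1) = n + 2 by ring,
    show ((n : ℚ) + 1 + (k + 1)) = n + k + 2 by ring]
  field_simp
  ring

theorem apT_last (n : ℕ) : apT n (n + 2) = - apA n (n + 1) := by
  have h1 := apC_n (n + 1) (n + 1) le_rfl
  have h3 := apC_k (n + 2) (n + 1)
  have hn : ((n : ℚ) + 1) ≠ 0 := by positivity
  have hn2 : ((n : ℚ) + 2) ≠ 0 := by positivity
  have h6 : (2 * (n : ℚ) + 3) ≠ 0 := by positivity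
  have hf := apE_ne (show n + 1 ≤ n + 1 by omega)
  have e2 : apE (n + 2) (n + 2)
      = (2 * (n : ℚ) + 3) * (2 * n + 4) * apE (n + 1) (n + 1) / ((n : ℚ) + 2) ^ 2 := by
    have := apE_nk (n + 1) (n + 1)
    rw [eq_div_iff (by positivity)]
    push_cast at this
    linear_combination this
  have e3 : apE (n + 2) (n + 1) = (2 * (n : ℚ) + 3) * apE (n + 1) (n + 1) := by
    have := apE_n (n + 1) (n + 1)
    push_cast at this
    linear_combination this
  unfold apT apA
  rw [apE_gt (show n < n + 2 by omega), apE_gt (show n + 1 < n + 2 by omega)]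
  rw [show n + 1 + 1 = n + 2 by omega] at h1 h3
  rw [h3, h1, e2, e3]
  generalize apE (n + 1) (n + 1) = f at *
  generalize apC (n + 1) (n + 1) = c at *
  generalize (-1 : ℚ) ^ (n + 1) = s at *
  push_cast
  rw [show ((n : ℚ) + 1 + 1 - (n + 1)) = 1 by ring,
    show ((n : ℚ) + 1 + 1) = n + 2 by ring]
  field_simp
  ring

theorem apT_sum (n K : ℕ) (h : K ≤ n + 1) :
    ∑ k ∈ Finset.range (K + 1), apT n k = apA n K := by
  induction K with
  | zero => simp [apT_zero]
  | succ K ih =>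
    rw [Finset.sum_range_succ, ih (by omega), apT_succ n K (by omega)]
    ring

theorem aperyHat_eq (n N : ℕ) (h : n ≤ N) :
    aperyHat n = ∑ k ∈ Finset.range (N + 1), apE n k ^ 2 * apC n k := by
  have : aperyHat n = ∑ k ∈ Finset.range (n + 1), apE n k ^ 2 * apC n k := by
    unfold aperyHat
    refine Finset.sum_congr rfl fun k _ => ?_
    unfold apE apC
    rw [mul_pow]
  rw [this]
  refine Finset.sum_subset (by intro x; simp; omega) fun k _ hk => ?_
  rw [apE_gt (by simpa using hk)]
  ring

/-- The second Apéry sequence satisfies Apéry's recurrence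
`(n+2)³·â_{n+2} − (34n³+153n²+231n+117)·â_{n+1} + (n+1)³·âₙ = 0`. -/
theorem aperyHat_recurrence (n : ℕ) :
    ((n : ℚ) + 2) ^ 3 * aperyHat (n + 2)
      - (34 * (n : ℚ) ^ 3 + 153 * (n : ℚ) ^ 2 + 231 * (n : ℚ) + 117) * aperyHat (n + 1)
      + ((n : ℚ) + 1) ^ 3 * aperyHat n = 0 := by
  rw [aperyHat_eq (n + 2) (n + 2) le_rfl, aperyHat_eq (n + 1) (n + 2) (by omega),
    aperyHat_eq n (n + 2) (by omega), Finset.mul_sum, Finset.mul_sum, Finset.mul_sum,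
    ← Finset.sum_sub_distrib, ← Finset.sum_add_distrib]
  change ∑ k ∈ Finset.range (n + 2 + 1), apT n k = 0
  rw [Finset.sum_range_succ, apT_sum n (n + 1) le_rfl, apT_last]
  ring
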